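/- arXiv:2110.04566 — 2 statements merged into one kernel-verified Lean document; each statement's English description precedes it below -/
import Mathlib

section
/- For every Schwartz function φ : ℝ³ → ℂ and every ε > 0, the function x ↦ K(x)·(𝓕φ)(x) is integrable on {x ∈ ℝ³ : |x| ≥ ε}, and lim_{ε→0⁺} ∫_{|x| ≥ ε} K(x) (𝓕φ)(x) dx = ∫_{ℝ³} m(ξ) φ(ξ) dξ. In other words, the Fourier transform of the dipolar kernel K, taken in the sense of tempered distributions with K understood as a principal value, is the function m(ξ) = (4π/3)(2ξ₃² − ξ₂² − ξ₁²)/|ξ|². -/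
open MeasureTheory FourierTransform SchwartzMap Filter

noncomputable section

-- The dipolar symbol `m(ξ) = (4π/3)(2ξ₃² − ξ₂² − ξ₁²)/|ξ|²`, with `m(0) := 0`.
open Classical in
def dipm (ξ : EuclideanSpace ℝ (Fin 3)) : ℝ :=
  if ξ = 0 then 0
  else (4 * Real.pi / 3) * (2 * (ξ 2) ^ 2 - (ξ 1) ^ 2 - (ξ 0) ^ 2) / ‖ξ‖ ^ 2

-- The dipolar kernel `K(x) = (x₁² + x₂² − 2x₃²)/|x|⁵` (understood away from the origin).
def dipK (x : EuclideanSpace ℝ (Fin 3)) : ℝ :=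
  ((x 0) ^ 2 + (x 1) ^ 2 - 2 * (x 2) ^ 2) / ‖x‖ ^ 5

/-! Let `A` be traceless on a space of dimension `n`. Up to constants, the kernel
`⟪A x, x⟫ / ‖x‖ ^ (n + 2)` and the symbol `⟪A ξ, ξ⟫ / ‖ξ‖ ^ 2` are the integrals over `t > 0` of
`t ^ (n / 2) * exp (-π t ‖x‖ ^ 2) * ⟪A x, x⟫` and `t ^ (-2) * exp (-π ‖ξ‖ ^ 2 / t) * ⟪A ξ, ξ⟫`. For
each `t` the Fourier transform takes the first integrand to minus the second: it turns a Gaussian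
into a Gaussian and multiplication by coordinates into differentiation, and differentiating the
Gaussian twice produces a further term proportional to the trace of `A`, which vanishes.

To integrate this identity over `t` one needs absolute convergence at the origin. By isotropy the
kernel has mean zero on every annulus, so subtracting `f 0` from the test function `f` on the unit
ball changes no truncated integral, and the Lipschitz bound on `f` then tames the singularity. -/

section

open Metric Module
open scoped LineDeriv RealInnerProductSpace

section Schwartz

variable {E F : Type*} [NormedAddCommGroup E] [NormedAddCommGroup F] [NormedSpace ℝ F]

lemma integrable_temperate_smul [NormedSpace ℝ E] [FiniteDimensional ℝ E] [MeasurableSpace E]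
    [BorelSpace E] {μ : Measure E} [μ.HasTemperateGrowth] {g : E → ℝ} (hg : g.HasTemperateGrowth)
    (ψ : 𝓢(E, F)) : Integrable (fun x => g x • ψ x) μ :=
  (smulLeftCLM F g ψ).integrable.congr (ae_of_all _ (smulLeftCLM_apply_apply hg ψ))

lemma exists_lipschitzWith_schwartz [NormedSpace ℝ E] (ψ : 𝓢(E, F)) : ∃ C, LipschitzWith C ψ := by
  obtain ⟨C, hC, hψ⟩ := ψ.decay 0 1
  lift C to NNReal using hC.le
  refine ⟨C, lipschitzWith_of_nnnorm_fderiv_le (𝕜 := ℝ) ψ.differentiable fun x => ?_⟩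
  simpa [norm_iteratedFDeriv_one, ← NNReal.coe_le_coe] using hψ x

lemma lineDerivOp_smulLeftCLM_inner_apply [InnerProductSpace ℝ E] (ψ : 𝓢(E, F)) (v w x : E) :
    ∂_{w} (smulLeftCLM F (⟪·, v⟫) ψ) x = ⟪w, v⟫ • ψ x + ⟪x, v⟫ • ∂_{w} ψ x := by
  have h : HasFDerivAt (fun y => ⟪y, v⟫ • ψ y) _ x :=
    ((hasFDerivAt_id x).inner ℝ (hasFDerivAt_const v x)).smul (ψ.hasFDerivAt x)
  have hψ : ⇑(smulLeftCLM F (⟪·, v⟫) ψ) = fun y => ⟪y, v⟫ • ψ y :=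
    funext (smulLeftCLM_apply_apply (by fun_prop) ψ)
  rw [lineDerivOp_apply_eq_fderiv, hψ, h.fderiv, lineDerivOp_apply_eq_fderiv]
  simp [add_comm]

end Schwartz

section Gaussian

variable {V F : Type*} [NormedAddCommGroup V] [NormedAddCommGroup F]

lemma integrable_gaussian_smul [MeasurableSpace V] [OpensMeasurableSpace V]
    [NormedSpace ℝ F] {μ : Measure V} {s : ℝ} (hs : 0 ≤ s) {f : V → F}
    (hf : Integrable f μ) : Integrable (fun x => Real.exp (-(s * ‖x‖ ^ 2)) • f x) μ := by
  refine hf.bdd_smul 1 (Continuous.aestronglyMeasurable (by fun_prop)) (ae_of_all _ fun x => ?_)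
  rw [Real.norm_of_nonneg (Real.exp_nonneg _), Real.exp_le_one_iff]
  exact neg_nonpos.2 (by positivity)

variable [InnerProductSpace ℝ V]

lemma hasFDerivAt_gaussian (s : ℝ) (x : V) :
    HasFDerivAt (fun y : V => Real.exp (-(s * ‖y‖ ^ 2)))
      (-(2 * s * Real.exp (-(s * ‖x‖ ^ 2))) • innerSL ℝ x) x := by
  convert! ((hasStrictFDerivAt_norm_sq x).hasFDerivAt.const_mul s).neg.exp using 1
  ext v
  simp only [neg_smul, neg_apply, smul_apply, coe_innerSL_apply, smul_eq_mul, Pi.neg_apply,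
    smul_neg, nsmul_eq_mul, Nat.cast_ofNat]
  ring

variable [FiniteDimensional ℝ V] [MeasurableSpace V] [BorelSpace V]

lemma integral_gaussian_smul_lineDerivOp [NormedSpace ℝ F] {μ : Measure V} [μ.IsAddHaarMeasure]
    {s : ℝ} (hs : 0 ≤ s) (ψ : 𝓢(V, F)) (v : V) :
    ∫ x, Real.exp (-(s * ‖x‖ ^ 2)) • ∂_{v} ψ x ∂μ =
      (2 * s) • ∫ x, Real.exp (-(s * ‖x‖ ^ 2)) • ⟪x, v⟫ • ψ x ∂μ := by
  have hfderiv (x : V) : fderiv ℝ (fun y : V => Real.exp (-(s * ‖y‖ ^ 2))) x v • ψ x =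
      -(2 * s) • Real.exp (-(s * ‖x‖ ^ 2)) • ⟪x, v⟫ • ψ x := by
    rw [(hasFDerivAt_gaussian s x).fderiv]
    simp only [smul_apply, coe_innerSL_apply, smul_eq_mul, smul_smul]
    module
  have hint : Integrable (fun x => Real.exp (-(s * ‖x‖ ^ 2)) • ⟪x, v⟫ • ψ x) μ :=
    integrable_gaussian_smul hs (integrable_temperate_smul (by fun_prop) ψ)
  simp only [lineDerivOp_apply_eq_fderiv]
  rw [integral_smul_fderiv_eq_neg_fderiv_smul_of_integrable]
  · rw [neg_eq_iff_eq_neg, ← neg_smul, ← integral_smul]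
    simp only [hfderiv]
  · simpa only [hfderiv] using hint.fun_smul (-(2 * s))
  · exact integrable_gaussian_smul hs (∂_{v} ψ).integrable
  · exact integrable_gaussian_smul hs ψ.integrable
  · exact fun x _ => (hasFDerivAt_gaussian s x).differentiableAt
  · exact fun x _ => ψ.differentiableAt

lemma integral_gaussian_smul_lineDerivOp_lineDerivOp [NormedSpace ℝ F] {μ : Measure V}
    [μ.IsAddHaarMeasure] {s : ℝ} (hs : 0 ≤ s) (ψ : 𝓢(V, F)) (v w : V) :
    ∫ x, Real.exp (-(s * ‖x‖ ^ 2)) • ∂_{v} (∂_{w} ψ) x ∂μ =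
      (4 * s ^ 2) • ∫ x, Real.exp (-(s * ‖x‖ ^ 2)) • (⟪x, v⟫ * ⟪x, w⟫) • ψ x ∂μ -
        (2 * s * ⟪v, w⟫) • ∫ x, Real.exp (-(s * ‖x‖ ^ 2)) • ψ x ∂μ := by
  set χ := smulLeftCLM F (⟪·, v⟫) ψ
  have hχ (x : V) : χ x = ⟪x, v⟫ • ψ x := smulLeftCLM_apply_apply (by fun_prop) ψ x
  have hprod (x : V) : ⟪x, v⟫ • ∂_{w} ψ x = ∂_{w} χ x - ⟪v, w⟫ • ψ x := by
    rw [lineDerivOp_smulLeftCLM_inner_apply, real_inner_comm v w, add_sub_cancel_left]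
  calc ∫ x, Real.exp (-(s * ‖x‖ ^ 2)) • ∂_{v} (∂_{w} ψ) x ∂μ
    _ = (2 * s) • ∫ x, Real.exp (-(s * ‖x‖ ^ 2)) • (∂_{w} χ x - ⟪v, w⟫ • ψ x) ∂μ := by
      simp only [integral_gaussian_smul_lineDerivOp hs, hprod]
    _ = (2 * s) • (∫ x, Real.exp (-(s * ‖x‖ ^ 2)) • ∂_{w} χ x ∂μ -
          ⟪v, w⟫ • ∫ x, Real.exp (-(s * ‖x‖ ^ 2)) • ψ x ∂μ) := by
      simp only [smul_sub (Real.exp _), smul_comm _ ⟪v, w⟫]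
      rw [integral_sub (integrable_gaussian_smul hs (∂_{w} χ).integrable)
        ((integrable_gaussian_smul hs ψ.integrable).fun_smul _), integral_smul]
    _ = _ := by
      simp only [integral_gaussian_smul_lineDerivOp hs, hχ, smul_smul ⟪_, w⟫, mul_comm ⟪_, w⟫]
      module

lemma fourier_lineDerivOp_lineDerivOp_apply [NormedSpace ℂ F] (ψ : 𝓢(V, F)) (v w x : V) :
    𝓕 (∂_{v} (∂_{w} ψ)) x = -(4 * Real.pi ^ 2) • (⟪x, v⟫ * ⟪x, w⟫) • 𝓕 ψ x := by
  have hinner (u : V) (χ : 𝓢(V, F)) : smulLeftCLM F (⟪·, u⟫) χ x = ⟪x, u⟫ • χ x :=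
    smulLeftCLM_apply_apply (by fun_prop) χ x
  simp only [fourier_lineDerivOp_eq, smul_apply, hinner, ← Complex.coe_smul, smul_smul]
  congr 1
  push_cast
  linear_combination 4 * (Real.pi : ℂ) ^ 2 * ⟪x, v⟫ * ⟪x, w⟫ * Complex.I_sq

lemma fourier_gaussian_pi_mul {t : ℝ} (ht : 0 < t) (ξ : V) :
    𝓕 (fun x : V => (Real.exp (-(Real.pi * t * ‖x‖ ^ 2)) : ℂ)) ξ =
      (t ^ (-(finrank ℝ V / 2 : ℝ)) * Real.exp (-(Real.pi / t * ‖ξ‖ ^ 2)) : ℝ) := by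
  have h := fourier_gaussian_innerProductSpace (b := (Real.pi * t : ℝ))
    (by rw [Complex.ofReal_re]; positivity) ξ
  have hdiv : (Real.pi / (Real.pi * t : ℝ) : ℂ) = (t⁻¹ : ℝ) := by
    rw [← Complex.ofReal_div, ← div_div, div_self Real.pi_ne_zero, one_div]
  have hexp : (-Real.pi ^ 2 * ‖ξ‖ ^ 2 / (Real.pi * t : ℝ) : ℂ) =
      (-(Real.pi / t * ‖ξ‖ ^ 2) : ℝ) := by
    push_cast
    have := Complex.ofReal_ne_zero.2 Real.pi_ne_zero
    have := Complex.ofReal_ne_zero.2 ht.ne'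
    field_simp
  rw [hdiv, hexp] at h
  rw [Real.rpow_neg ht.le, ← Real.inv_rpow ht.le, Complex.ofReal_mul,
    Complex.ofReal_cpow (inv_nonneg.2 ht.le)]
  simpa using h

lemma integral_gaussian_smul_fourier [NormedSpace ℂ F] [CompleteSpace F] {t : ℝ} (ht : 0 < t)
    {f : V → F} (hf : Integrable f) :
    ∫ x, Real.exp (-(Real.pi * t * ‖x‖ ^ 2)) • 𝓕 f x =
      t ^ (-(finrank ℝ V / 2 : ℝ)) • ∫ ξ, Real.exp (-(Real.pi / t * ‖ξ‖ ^ 2)) • f ξ := by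
  have hgauss : Integrable (fun x : V => (Real.exp (-(Real.pi * t * ‖x‖ ^ 2)) : ℂ)) := by
    simpa using! GaussianFourier.integrable_cexp_neg_mul_sq_norm_add
      (b := (Real.pi * t : ℝ)) (by rw [Complex.ofReal_re]; positivity) 0 (0 : V)
  have h := VectorFourier.integral_fourierIntegral_smul_eq_flip (L := innerₗ V)
    Real.continuous_fourierChar continuous_inner hgauss hf
  rw [flip_innerₗ] at h
  simp only [← integral_smul, smul_smul, ← Complex.coe_smul (_ * _), ← fourier_gaussian_pi_mul ht]
  simp only [← Complex.coe_smul]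
  exact h.symm

lemma integral_gaussian_smul_inner_mul_inner_smul_fourier [NormedSpace ℂ F] [CompleteSpace F]
    {t : ℝ} (ht : 0 < t) (ψ : 𝓢(V, F)) (v w : V) :
    ∫ x, Real.exp (-(Real.pi * t * ‖x‖ ^ 2)) • (⟪x, v⟫ * ⟪x, w⟫) • 𝓕 ψ x =
      t ^ (-(finrank ℝ V / 2 : ℝ)) •
        ((⟪v, w⟫ / (2 * Real.pi * t)) • (∫ ξ, Real.exp (-(Real.pi / t * ‖ξ‖ ^ 2)) • ψ ξ) -
          (t ^ 2)⁻¹ • ∫ ξ, Real.exp (-(Real.pi / t * ‖ξ‖ ^ 2)) • (⟪ξ, v⟫ * ⟪ξ, w⟫) • ψ ξ) := by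
  have h := integral_gaussian_smul_fourier ht (∂_{v} (∂_{w} ψ)).integrable
  rw [← fourier_coe, integral_gaussian_smul_lineDerivOp_lineDerivOp (by positivity)] at h
  simp only [fourier_lineDerivOp_lineDerivOp_apply, smul_comm _ (-(4 * Real.pi ^ 2)),
    integral_smul] at h
  have hpi := Real.pi_ne_zero
  refine smul_right_injective F (r := -(4 * Real.pi ^ 2)) (by simp) (h.trans ?_)
  match_scalars <;> field_simp
  ring

end Gaussian

section QuadraticForm

variable {V : Type*} [NormedAddCommGroup V] [InnerProductSpace ℝ V]

lemma inner_map_self_eq_sum {ι : Type*} [Fintype ι] (b : OrthonormalBasis ι ℝ V) (A : V →ₗ[ℝ] V)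
    (x : V) : ⟪A x, x⟫ = ∑ i, ⟪x, b i⟫ * ⟪x, A (b i)⟫ := by
  rw [real_inner_comm]
  nth_rw 2 [← b.sum_repr' x]
  simp only [map_sum, map_smul, inner_sum, real_inner_smul_right, real_inner_comm x]

lemma abs_inner_map_self_le (A : V →L[ℝ] V) (x : V) : |⟪A x, x⟫| ≤ ‖A‖ * ‖x‖ ^ 2 :=
  calc |⟪A x, x⟫| ≤ ‖A x‖ * ‖x‖ := abs_real_inner_le_norm _ _
    _ ≤ ‖A‖ * ‖x‖ * ‖x‖ := by gcongr; exact A.le_opNorm x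
    _ = ‖A‖ * ‖x‖ ^ 2 := by ring

variable {F : Type*} [NormedAddCommGroup F] [NormedSpace ℝ F] [MeasurableSpace V] [BorelSpace V]
  {μ : Measure V} {f : V → F}

lemma integrable_inner_mul_inner_smul (hf : Integrable (fun x => ‖x‖ ^ 2 • f x) μ) (v w : V) :
    Integrable (fun x => (⟪x, v⟫ * ⟪x, w⟫) • f x) μ := by
  have hmeas : AEStronglyMeasurable (fun x => ⟪x, v⟫ * ⟪x, w⟫ / ‖x‖ ^ 2) μ := by
    have hcont : Continuous fun x => ⟪x, v⟫ * ⟪x, w⟫ := by fun_prop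
    exact (hcont.measurable.div (by fun_prop)).aestronglyMeasurable
  have hbound (x : V) : ‖⟪x, v⟫ * ⟪x, w⟫ / ‖x‖ ^ 2‖ ≤ ‖v‖ * ‖w‖ := by
    rw [norm_div, norm_mul, norm_pow, norm_norm]
    refine div_le_of_le_mul₀ (by positivity) (by positivity) ?_
    calc ‖⟪x, v⟫‖ * ‖⟪x, w⟫‖ ≤ (‖x‖ * ‖v‖) * (‖x‖ * ‖w‖) := by
          gcongr <;> exact norm_inner_le_norm _ _
      _ = ‖v‖ * ‖w‖ * ‖x‖ ^ 2 := by ring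
  refine (hf.bdd_smul _ hmeas (ae_of_all _ hbound)).congr (ae_of_all _ fun x => ?_)
  rcases eq_or_ne x 0 with rfl | hx
  · simp
  · simp only [Pi.smul_apply', smul_smul, div_mul_cancel₀ _ (pow_ne_zero 2 (norm_ne_zero_iff.2 hx))]

lemma integrable_inner_map_self_smul [FiniteDimensional ℝ V]
    (hf : Integrable (fun x => ‖x‖ ^ 2 • f x) μ) (A : V →ₗ[ℝ] V) :
    Integrable (fun x => ⟪A x, x⟫ • f x) μ := by
  simp only [inner_map_self_eq_sum (stdOrthonormalBasis ℝ V), Finset.sum_smul]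
  exact integrable_finsetSum _ fun i _ => integrable_inner_mul_inner_smul hf _ _

lemma integral_inner_map_self_smul {ι : Type*} [Fintype ι] (b : OrthonormalBasis ι ℝ V)
    (hf : Integrable (fun x => ‖x‖ ^ 2 • f x) μ) (A : V →ₗ[ℝ] V) :
    ∫ x, ⟪A x, x⟫ • f x ∂μ = ∑ i, ∫ x, (⟪x, b i⟫ * ⟪x, A (b i)⟫) • f x ∂μ := by
  simp only [inner_map_self_eq_sum b, Finset.sum_smul]
  exact integral_finsetSum _ fun i _ => integrable_inner_mul_inner_smul hf _ _

end QuadraticForm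

section Isotropy

variable {V F : Type*} [NormedAddCommGroup V] [InnerProductSpace ℝ V] [FiniteDimensional ℝ V]
  [MeasurableSpace V] [BorelSpace V] [NormedAddCommGroup F] [NormedSpace ℝ F] {g : ℝ → F}

lemma integral_inner_sq_smul_norm_congr {v w : V} (hvw : ‖v‖ = ‖w‖) (g : ℝ → F) :
    ∫ x, ⟪x, v⟫ ^ 2 • g ‖x‖ = ∫ x, ⟪x, w⟫ ^ 2 • g ‖x‖ := by
  let ρ := (ℝ ∙ (v - w))ᗮ.reflection
  have hρ : ρ v = w := Submodule.reflection_sub hvw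
  rw [← ρ.measurePreserving.integral_comp ρ.toMeasurableEquiv.measurableEmbedding
    (fun x => ⟪x, w⟫ ^ 2 • g ‖x‖)]
  simp only [ρ.norm_map, ← hρ, ρ.inner_map_map]

lemma integral_inner_mul_inner_smul_norm (hg : Integrable (fun x : V => ‖x‖ ^ 2 • g ‖x‖))
    {u : V} (hu : ‖u‖ = 1) (v w : V) :
    ∫ x, (⟪x, v⟫ * ⟪x, w⟫) • g ‖x‖ = ⟪v, w⟫ • ∫ x, ⟪x, u⟫ ^ 2 • g ‖x‖ := by
  have hsq (z : V) : ∫ x, ⟪x, z⟫ ^ 2 • g ‖x‖ = ‖z‖ ^ 2 • ∫ x, ⟪x, u⟫ ^ 2 • g ‖x‖ := by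
    rw [integral_inner_sq_smul_norm_congr (w := ‖z‖ • u) (by simp [norm_smul, hu]),
      ← integral_smul]
    simp only [real_inner_smul_right, mul_pow, mul_smul]
  have hint (z : V) : Integrable (fun x => ⟪x, z⟫ ^ 2 • g ‖x‖) := by
    simpa only [sq] using integrable_inner_mul_inner_smul hg z z
  calc ∫ x, (⟪x, v⟫ * ⟪x, w⟫) • g ‖x‖
    _ = ∫ x, (4 : ℝ)⁻¹ • (⟪x, v + w⟫ ^ 2 • g ‖x‖ - ⟪x, v - w⟫ ^ 2 • g ‖x‖) := by
      simp only [inner_add_right, inner_sub_right]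
      congr! 2 with x
      module
    _ = (4 : ℝ)⁻¹ • ((‖v + w‖ ^ 2 - ‖v - w‖ ^ 2) • ∫ x, ⟪x, u⟫ ^ 2 • g ‖x‖) := by
      rw [integral_smul, integral_sub (hint _) (hint _), hsq (v + w), hsq (v - w), sub_smul]
    _ = ⟪v, w⟫ • ∫ x, ⟪x, u⟫ ^ 2 • g ‖x‖ := by
      rw [smul_smul, norm_add_sq_real, norm_sub_sq_real]
      ring_nf

lemma integral_inner_map_self_smul_norm (hg : Integrable (fun x : V => ‖x‖ ^ 2 • g ‖x‖))
    {u : V} (hu : ‖u‖ = 1) (A : V →ₗ[ℝ] V) :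
    ∫ x, ⟪A x, x⟫ • g ‖x‖ = LinearMap.trace ℝ V A • ∫ x, ⟪x, u⟫ ^ 2 • g ‖x‖ := by
  let b := stdOrthonormalBasis ℝ V
  rw [integral_inner_map_self_smul b hg, A.trace_eq_sum_inner b, Finset.sum_smul]
  simp only [integral_inner_mul_inner_smul_norm hg hu]

lemma integral_inner_map_self_smul_norm_eq_zero (hg : Integrable (fun x : V => ‖x‖ ^ 2 • g ‖x‖))
    {A : V →ₗ[ℝ] V} (hA : LinearMap.trace ℝ V A = 0) : ∫ x, ⟪A x, x⟫ • g ‖x‖ = 0 := by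
  cases subsingleton_or_nontrivial V
  · simp [Subsingleton.elim _ (0 : V)]
  · obtain ⟨u, hu⟩ := exists_norm_eq V zero_le_one
    rw [integral_inner_map_self_smul_norm hg hu, hA, zero_smul]

lemma setIntegral_inner_map_self_smul_norm_eq_zero {a b : ℝ} (hg : ContinuousOn g (Set.Icc a b))
    {A : V →ₗ[ℝ] V} (hA : LinearMap.trace ℝ V A = 0) :
    ∫ x in {x | ‖x‖ ∈ Set.Icc a b}, ⟪A x, x⟫ • g ‖x‖ = 0 := by
  classical
  have hmeas : MeasurableSet {x : V | ‖x‖ ∈ Set.Icc a b} := measurable_norm measurableSet_Icc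
  have hcompact : IsCompact {x : V | ‖x‖ ∈ Set.Icc a b} :=
    (isCompact_closedBall 0 b).of_isClosed_subset (isClosed_Icc.preimage continuous_norm)
      fun x hx => mem_closedBall_zero_iff.2 hx.2
  have hcont : ContinuousOn (fun x : V => ‖x‖ ^ 2 • g ‖x‖) {x | ‖x‖ ∈ Set.Icc a b} :=
    (by fun_prop : ContinuousOn (fun x : V => ‖x‖ ^ 2) _).smul
      (hg.comp continuous_norm.continuousOn fun _ hx => hx)
  have hint : Integrable (fun x : V => ‖x‖ ^ 2 • (Set.Icc a b).indicator g ‖x‖) := by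
    refine ((integrable_indicator_iff hmeas).2 (hcont.integrableOn_compact hcompact)).congr
      (ae_of_all _ fun x => ?_)
    simp only [Set.indicator_apply, Set.mem_ofPred_eq, smul_ite, smul_zero]
  rw [← integral_inner_map_self_smul_norm_eq_zero hint hA, ← integral_indicator hmeas]
  simp only [Set.indicator_apply, Set.mem_ofPred_eq, smul_ite, smul_zero]

end Isotropy

/-- The function `f - f 0 • 1_B`, with `B` the closed unit ball. For a kernel of mean zero on every
annulus around the origin, replacing `f` by it makes the principal value absolutely convergent. -/
def remainderAtZero {E F : Type*} [SeminormedAddCommGroup E] [AddCommGroup F] (f : E → F) (x : E) :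
    F :=
  f x - (closedBall 0 1).indicator (fun _ => f 0) x

lemma integrable_remainderAtZero {E F : Type*} [SeminormedAddCommGroup E] [ProperSpace E]
    [MeasurableSpace E] [OpensMeasurableSpace E] [NormedAddCommGroup F] {μ : Measure E}
    [IsFiniteMeasureOnCompacts μ] {f : E → F} (hf : Integrable f μ) :
    Integrable (remainderAtZero f) μ :=
  hf.sub ((integrableOn_const measure_closedBall_lt_top.ne).integrable_indicator
    measurableSet_closedBall)

section PrincipalValue

variable {E F : Type*} [NormedAddCommGroup E] [NormedSpace ℝ E] [MeasurableSpace E] [BorelSpace E]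
  [NormedAddCommGroup F] [NormedSpace ℝ F] {μ : Measure E} {K : E → ℝ} {C : NNReal} {f : E → F}

lemma integrableOn_smul_of_abs_le_div_norm_pow (hK : Measurable K)
    (hKC : ∀ x, |K x| ≤ C / ‖x‖ ^ finrank ℝ E) (hf : Integrable f μ) {ε : ℝ} (hε : 0 < ε) :
    IntegrableOn (fun x => K x • f x) {x | ε ≤ ‖x‖} μ := by
  refine hf.integrableOn.bdd_smul (C / ε ^ finrank ℝ E) hK.aestronglyMeasurable ?_
  filter_upwards [ae_restrict_mem (measurableSet_le measurable_const measurable_norm)] with x hx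
  calc ‖K x‖ ≤ C / ‖x‖ ^ finrank ℝ E := hKC x
    _ ≤ C / ε ^ finrank ℝ E := by gcongr

variable [FiniteDimensional ℝ E] [μ.IsAddHaarMeasure]

lemma integrableOn_closedBall_norm_div_norm_pow_finrank [Nontrivial E] (r : ℝ) :
    IntegrableOn (fun x : E => ‖x‖ / ‖x‖ ^ finrank ℝ E) (closedBall 0 r) μ := by
  refine IntegrableOn.mono_set ((integrableOn_fun_norm_addHaar (r := r + 1) μ
    (f := fun y => y / y ^ finrank ℝ E)).2 ?_) (closedBall_subset_ball (lt_add_one r))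
  refine (integrableOn_const (C := (1 : ℝ)) (by simp)).congr_fun (fun y hy => ?_) measurableSet_Ioo
  have hy : y ≠ 0 := hy.1.ne'
  have hpow : y ^ finrank ℝ E = y ^ (finrank ℝ E - 1) * y :=
    (pow_sub_one_mul finrank_pos.ne' y).symm
  rw [hpow, smul_eq_mul]
  field_simp

lemma integrable_smul_remainderAtZero [Nontrivial E] (hK : Measurable K)
    (hKC : ∀ x, |K x| ≤ C / ‖x‖ ^ finrank ℝ E) (hf : Integrable f μ) {L : NNReal}
    (hL : LipschitzWith L f) : Integrable (fun x => K x • remainderAtZero f x) μ := by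
  have hrem := integrable_remainderAtZero hf
  have hfar : IntegrableOn (fun x => K x • remainderAtZero f x) {x | 1 ≤ ‖x‖} μ :=
    integrableOn_smul_of_abs_le_div_norm_pow hK hKC hrem one_pos
  have hnear : IntegrableOn (fun x => K x • remainderAtZero f x) (closedBall 0 1) μ := by
    refine ((integrableOn_closedBall_norm_div_norm_pow_finrank 1).const_mul (C * L : ℝ)).mono'
      (hK.aestronglyMeasurable.smul hrem.aestronglyMeasurable).restrict ?_
    filter_upwards [ae_restrict_mem measurableSet_closedBall] with x hx
    rw [norm_smul, remainderAtZero, Set.indicator_of_mem hx]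
    calc ‖K x‖ * ‖f x - f 0‖ ≤ C / ‖x‖ ^ finrank ℝ E * (L * ‖x‖) := by
          gcongr
          · exact hKC x
          · simpa using hL.norm_sub_le x 0
      _ = C * L * (‖x‖ / ‖x‖ ^ finrank ℝ E) := by ring
  rw [← integrableOn_univ]
  exact (hnear.union hfar).mono_set fun x _ => (le_total ‖x‖ 1).imp mem_closedBall_zero_iff.2 id

lemma setIntegral_smul_remainderAtZero [CompleteSpace F] (hK : Measurable K)
    (hKC : ∀ x, |K x| ≤ C / ‖x‖ ^ finrank ℝ E) {ε : ℝ} (hε : 0 < ε)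
    (hK0 : ∫ x in {x | ‖x‖ ∈ Set.Icc ε 1}, K x ∂μ = 0) (hf : Integrable f μ) :
    ∫ x in {x | ε ≤ ‖x‖}, K x • remainderAtZero f x ∂μ = ∫ x in {x | ε ≤ ‖x‖}, K x • f x ∂μ := by
  have hball : ∫ x in {x | ε ≤ ‖x‖}, K x • (closedBall 0 1).indicator (fun _ => f 0) x ∂μ = 0 := by
    have hinter : {x : E | ε ≤ ‖x‖} ∩ closedBall 0 1 = {x | ‖x‖ ∈ Set.Icc ε 1} := by
      ext x
      simp
    simp only [← Set.indicator_smul_apply]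
    rw [setIntegral_indicator measurableSet_closedBall, hinter, integral_smul_const, hK0, zero_smul]
  have hind : Integrable ((closedBall (0 : E) 1).indicator fun _ => f 0) μ :=
    (integrableOn_const measure_closedBall_lt_top.ne).integrable_indicator measurableSet_closedBall
  simp only [remainderAtZero, smul_sub]
  rw [integral_sub (integrableOn_smul_of_abs_le_div_norm_pow hK hKC hf hε)
    (integrableOn_smul_of_abs_le_div_norm_pow hK hKC hind hε), hball, sub_zero]

lemma tendsto_setIntegral_smul_integral_smul_remainderAtZero [Nontrivial E] [CompleteSpace F]
    (hK : Measurable K) (hKC : ∀ x, |K x| ≤ C / ‖x‖ ^ finrank ℝ E)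
    (hK0 : ∀ ε > 0, ∫ x in {x | ‖x‖ ∈ Set.Icc ε 1}, K x ∂μ = 0) (hf : Integrable f μ) {L : NNReal}
    (hL : LipschitzWith L f) :
    Tendsto (fun ε : ℝ => ∫ x in {x | ε ≤ ‖x‖}, K x • f x ∂μ) (nhdsWithin 0 (Set.Ioi 0))
      (nhds (∫ x, K x • remainderAtZero f x ∂μ)) := by
  have hcover : AECover μ (nhdsWithin (0 : ℝ) (Set.Ioi 0)) fun ε => {x : E | ε ≤ ‖x‖} := by
    refine ⟨?_, fun ε => measurableSet_le measurable_const measurable_norm⟩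
    filter_upwards [Measure.ae_ne μ 0] with x hx
    exact mem_nhdsWithin_of_mem_nhds (Iic_mem_nhds (norm_pos_iff.2 hx))
  refine (hcover.integral_tendsto_of_countably_generated
    (integrable_smul_remainderAtZero hK hKC hf hL)).congr' ?_
  filter_upwards [self_mem_nhdsWithin] with ε hε
  exact setIntegral_smul_remainderAtZero hK hKC hε (hK0 ε hε) hf

end PrincipalValue

section Superposition

lemma integral_integral_smul_swap_of_nonneg {X T F : Type*} [MeasurableSpace X] [MeasurableSpace T]
    {μ : Measure X} [SFinite μ] {ν : Measure T} [SFinite ν] [NormedAddCommGroup F] [NormedSpace ℝ F]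
    [CompleteSpace F] {k : X → T → ℝ} {f : X → F} (hk : Measurable (Function.uncurry k))
    (hk0 : ∀ x, 0 ≤ᵐ[ν] k x) (hki : ∀ᵐ x ∂μ, Integrable (k x) ν) (hf : AEStronglyMeasurable f μ)
    (hkf : Integrable (fun x => (∫ t, k x t ∂ν) • f x) μ) :
    ∫ x, (∫ t, k x t ∂ν) • f x ∂μ = ∫ t, ∫ x, k x t • f x ∂μ ∂ν := by
  have hint : Integrable (Function.uncurry fun x t => k x t • f x) (μ.prod ν) := by
    refine (integrable_prod_iff (hk.aestronglyMeasurable.smul hf.comp_fst)).2 ⟨?_, ?_⟩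
    · filter_upwards [hki] with x hx using hx.smul_const (f x)
    · have hnorm (x : X) : ∫ t, ‖k x t • f x‖ ∂ν = ‖(∫ t, k x t ∂ν) • f x‖ := by
        simp only [norm_smul, integral_mul_const]
        rw [Real.norm_of_nonneg (integral_nonneg_of_ae (hk0 x))]
        congr 1
        exact integral_congr_ae ((hk0 x).mono fun t ht => Real.norm_of_nonneg ht)
      exact hkf.norm.congr (ae_of_all _ fun x => (hnorm x).symm)
  rw [← integral_integral_swap hint]
  simp only [integral_smul_const]

end Superposition

section GaussianQuadratic

variable {V F : Type*} [NormedAddCommGroup V] [InnerProductSpace ℝ V] [FiniteDimensional ℝ V]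
  [MeasurableSpace V] [BorelSpace V] [NormedAddCommGroup F]

lemma integrable_norm_sq_smul_gaussian_smul [NormedSpace ℝ F] {μ : Measure V}
    [μ.HasTemperateGrowth] {s : ℝ} (hs : 0 ≤ s) (ψ : 𝓢(V, F)) :
    Integrable (fun x => ‖x‖ ^ 2 • Real.exp (-(s * ‖x‖ ^ 2)) • ψ x) μ := by
  simp only [smul_comm (‖_‖ ^ 2)]
  exact integrable_gaussian_smul hs (integrable_temperate_smul (by fun_prop) ψ)

lemma integral_gaussian_smul_inner_map_self_smul_fourier [NormedSpace ℂ F] [CompleteSpace F]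
    {t : ℝ} (ht : 0 < t) (A : V →ₗ[ℝ] V) (ψ : 𝓢(V, F)) :
    ∫ x, Real.exp (-(Real.pi * t * ‖x‖ ^ 2)) • ⟪A x, x⟫ • 𝓕 ψ x =
      t ^ (-(finrank ℝ V / 2 : ℝ)) •
        ((LinearMap.trace ℝ V A / (2 * Real.pi * t)) •
            (∫ ξ, Real.exp (-(Real.pi / t * ‖ξ‖ ^ 2)) • ψ ξ) -
          (t ^ 2)⁻¹ • ∫ ξ, Real.exp (-(Real.pi / t * ‖ξ‖ ^ 2)) • ⟪A ξ, ξ⟫ • ψ ξ) := by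
  let b := stdOrthonormalBasis ℝ V
  have hsum {s : ℝ} (hs : 0 ≤ s) (χ : 𝓢(V, F)) :
      ∫ x, Real.exp (-(s * ‖x‖ ^ 2)) • ⟪A x, x⟫ • χ x =
        ∑ i, ∫ x, Real.exp (-(s * ‖x‖ ^ 2)) • (⟪x, b i⟫ * ⟪x, A (b i)⟫) • χ x := by
    simp only [smul_comm (Real.exp _)]
    exact integral_inner_map_self_smul b (integrable_norm_sq_smul_gaussian_smul hs χ) A
  rw [hsum (by positivity), hsum (by positivity), A.trace_eq_sum_inner b]
  simp only [integral_gaussian_smul_inner_mul_inner_smul_fourier ht, Finset.sum_div,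
    Finset.sum_smul, Finset.smul_sum, Finset.sum_sub_distrib, smul_sub]

end GaussianQuadratic

section TimeIntegrals

lemma integrableOn_rpow_mul_exp_neg_pi_mul {a : ℝ} (ha : -1 < a) {r : ℝ} (hr : 0 < r) :
    IntegrableOn (fun t : ℝ => t ^ a * Real.exp (-(Real.pi * t * r ^ 2))) (Set.Ioi 0) := by
  refine (integrableOn_rpow_mul_exp_neg_mul_rpow ha one_pos
    (by positivity : 0 < Real.pi * r ^ 2)).congr_fun (fun t _ => ?_) measurableSet_Ioi
  simp only [Real.rpow_one]
  ring_nf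

lemma integral_rpow_finrank_div_two_mul_exp_neg_pi_mul {V : Type*} [NormedAddCommGroup V]
    [InnerProductSpace ℝ V] [FiniteDimensional ℝ V] [MeasurableSpace V] [BorelSpace V]
    [Nontrivial V] {r : ℝ} (hr : 0 < r) :
    ∫ t in Set.Ioi (0 : ℝ), t ^ (finrank ℝ V / 2 : ℝ) * Real.exp (-(Real.pi * t * r ^ 2)) =
      (Real.pi * volume.real (ball (0 : V) 1) * r ^ (finrank ℝ V + 2))⁻¹ := by
  have hvol : volume.real (ball (0 : V) 1) =
      √Real.pi ^ finrank ℝ V / Real.Gamma (finrank ℝ V / 2 + 1) := by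
    rw [measureReal_def, InnerProductSpace.volume_ball, ENNReal.ofReal_one, one_pow, one_mul,
      ENNReal.toReal_ofReal (by positivity)]
  have hpow : (Real.pi * r ^ 2) ^ (finrank ℝ V / 2 + 1 : ℝ) =
      √Real.pi ^ finrank ℝ V * Real.pi * r ^ (finrank ℝ V + 2) := by
    rw [show Real.pi * r ^ 2 = (√Real.pi * r) ^ 2 by rw [mul_pow, Real.sq_sqrt Real.pi_nonneg],
      ← Real.rpow_natCast_mul (by positivity)]
    rw [show ((2 : ℕ) : ℝ) * (finrank ℝ V / 2 + 1) = (finrank ℝ V + 2 : ℕ) by push_cast; ring,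
      Real.rpow_natCast, mul_pow, pow_add √Real.pi, Real.sq_sqrt Real.pi_nonneg]
  have h := Real.integral_rpow_mul_exp_neg_mul_Ioi (a := finrank ℝ V / 2 + 1) (by positivity)
    (by positivity : 0 < Real.pi * r ^ 2)
  rw [one_div, Real.inv_rpow (by positivity), hpow] at h
  simp only [add_sub_cancel_right, mul_right_comm Real.pi] at h ⊢
  rw [h, hvol]
  field_simp

lemma inv_sq_mul_exp_neg_pi_div_eq_comp_rpow (r t : ℝ) :
    (t ^ 2)⁻¹ * Real.exp (-(Real.pi / t * r ^ 2)) =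
      (|(-1 : ℝ)| * t ^ (-1 - 1 : ℝ)) • Real.exp (-(Real.pi * r ^ 2) * t ^ (-1 : ℝ)) := by
  rw [abs_neg, abs_one, one_mul, smul_eq_mul, Real.rpow_neg_one,
    show (-1 - 1 : ℝ) = (-2 : ℤ) by norm_num, Real.rpow_intCast, zpow_neg, zpow_ofNat]
  ring_nf

lemma integrableOn_inv_sq_mul_exp_neg_pi_div {r : ℝ} (hr : 0 < r) :
    IntegrableOn (fun t : ℝ => (t ^ 2)⁻¹ * Real.exp (-(Real.pi / t * r ^ 2))) (Set.Ioi 0) := by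
  simp only [inv_sq_mul_exp_neg_pi_div_eq_comp_rpow]
  exact (integrableOn_Ioi_comp_rpow_iff (fun u => Real.exp (-(Real.pi * r ^ 2) * u))
    (by norm_num)).2 (exp_neg_integrableOn_Ioi 0 (by positivity))

lemma integral_inv_sq_mul_exp_neg_pi_div {r : ℝ} (hr : 0 < r) :
    ∫ t in Set.Ioi (0 : ℝ), (t ^ 2)⁻¹ * Real.exp (-(Real.pi / t * r ^ 2)) =
      (Real.pi * r ^ 2)⁻¹ := by
  simp only [inv_sq_mul_exp_neg_pi_div_eq_comp_rpow]
  rw [integral_comp_rpow_Ioi (fun u => Real.exp (-(Real.pi * r ^ 2) * u)) (by norm_num),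
    integral_exp_mul_Ioi (neg_lt_zero.2 (by positivity))]
  simp

end TimeIntegrals

section QuadraticKernel

variable {V : Type*} [NormedAddCommGroup V] [InnerProductSpace ℝ V]

/-- The kernel `x ↦ ⟪A x, x⟫ / ‖x‖ ^ (n + 2)`, homogeneous of degree `-n` with `n = dim V`. For
traceless `A` its numerator is a harmonic polynomial. -/
def quadraticKernel (A : V →L[ℝ] V) (x : V) : ℝ :=
  ⟪A x, x⟫ / ‖x‖ ^ (finrank ℝ V + 2)

lemma abs_quadraticKernel_le (A : V →L[ℝ] V) (x : V) :
    |quadraticKernel A x| ≤ ‖A‖₊ / ‖x‖ ^ finrank ℝ V := by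
  rw [quadraticKernel, abs_div, abs_of_nonneg (by positivity : 0 ≤ ‖x‖ ^ (finrank ℝ V + 2))]
  rcases eq_or_ne x 0 with rfl | hx
  · simp only [map_zero, inner_zero_left, abs_zero, zero_div]
    positivity
  · calc |⟪A x, x⟫| / ‖x‖ ^ (finrank ℝ V + 2)
      _ ≤ ‖A‖ * ‖x‖ ^ 2 / ‖x‖ ^ (finrank ℝ V + 2) := by
        gcongr
        exact abs_inner_map_self_le A x
      _ = ‖A‖₊ / ‖x‖ ^ finrank ℝ V := by
        rw [pow_add, mul_div_mul_right _ _ (by positivity), coe_nnnorm]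

variable [MeasurableSpace V] [BorelSpace V]

lemma measurable_quadraticKernel (A : V →L[ℝ] V) : Measurable (quadraticKernel A) := by
  have hcont : Continuous fun x => ⟪A x, x⟫ := by fun_prop
  exact hcont.measurable.div (by fun_prop)

variable [FiniteDimensional ℝ V]

/-- The Fourier transform of the principal value of `quadraticKernel A`, for traceless `A`. It takes
the value `0` at `ξ = 0` by division by zero. -/
def quadraticSymbol (A : V →L[ℝ] V) (ξ : V) : ℝ :=
  -volume.real (ball (0 : V) 1) * (⟪A ξ, ξ⟫ / ‖ξ‖ ^ 2)

lemma setIntegral_norm_mem_Icc_quadraticKernel_eq_zero {A : V →L[ℝ] V}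
    (hA : LinearMap.trace ℝ V A = 0) {ε R : ℝ} (hε : 0 < ε) :
    ∫ x in {x | ‖x‖ ∈ Set.Icc ε R}, quadraticKernel A x = 0 := by
  have hcont : ContinuousOn (fun r : ℝ => (r ^ (finrank ℝ V + 2))⁻¹) (Set.Icc ε R) :=
    (continuousOn_pow _).inv₀ fun r hr => pow_ne_zero _ (hε.trans_le hr.1).ne'
  simpa only [quadraticKernel, div_eq_mul_inv, smul_eq_mul, ContinuousLinearMap.coe_coe] using
    setIntegral_inner_map_self_smul_norm_eq_zero hcont hA

variable {F : Type*} [NormedAddCommGroup F]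

lemma integrable_quadraticSymbol_smul [NormedSpace ℝ F] {μ : Measure V} {f : V → F}
    (hf : Integrable f μ) (A : V →L[ℝ] V) : Integrable (fun ξ => quadraticSymbol A ξ • f ξ) μ := by
  have hcont : Continuous fun ξ => ⟪A ξ, ξ⟫ := by fun_prop
  refine hf.bdd_smul (volume.real (ball (0 : V) 1) * ‖A‖)
    ((hcont.measurable.div (by fun_prop)).const_mul _).aestronglyMeasurable
    (ae_of_all _ fun ξ => ?_)
  rw [quadraticSymbol, norm_mul, norm_neg, Real.norm_of_nonneg measureReal_nonneg, norm_div,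
    norm_pow, norm_norm]
  gcongr
  exact div_le_of_le_mul₀ (by positivity) (norm_nonneg _) (abs_inner_map_self_le A ξ)

lemma integral_quadraticKernel_smul_eq_integral_gaussian [Nontrivial V] [NormedSpace ℝ F]
    [CompleteSpace F] {A : V →L[ℝ] V} {f : V → F} (hf : AEStronglyMeasurable f)
    (hAf : Integrable fun x => quadraticKernel A x • f x) :
    ∫ x, quadraticKernel A x • f x =
      (Real.pi * volume.real (ball (0 : V) 1)) • ∫ t in Set.Ioi (0 : ℝ), ∫ x,
        (t ^ (finrank ℝ V / 2 : ℝ) * Real.exp (-(Real.pi * t * ‖x‖ ^ 2))) • ⟪A x, x⟫ • f x := by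
  set c := Real.pi * volume.real (ball (0 : V) 1) with hc
  have hc0 : c ≠ 0 := mul_ne_zero Real.pi_ne_zero
    (ENNReal.toReal_pos (measure_ball_pos _ _ one_pos).ne' measure_ball_lt_top.ne).ne'
  have hmix (x : V) : quadraticKernel A x • f x = (∫ t in Set.Ioi (0 : ℝ),
      t ^ (finrank ℝ V / 2 : ℝ) * Real.exp (-(Real.pi * t * ‖x‖ ^ 2))) • c • ⟪A x, x⟫ • f x := by
    rcases eq_or_ne x 0 with rfl | hx
    · simp [quadraticKernel]
    · rw [integral_rpow_finrank_div_two_mul_exp_neg_pi_mul (norm_pos_iff.2 hx), quadraticKernel,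
        smul_smul, smul_smul, ← hc]
      congr 1
      field_simp
  have hmeas : AEStronglyMeasurable fun x => c • ⟪A x, x⟫ • f x :=
    ((by fun_prop : Continuous fun x => ⟪A x, x⟫).aestronglyMeasurable.smul hf).const_smul c
  simp only [hmix] at hAf ⊢
  rw [integral_integral_smul_swap_of_nonneg (by fun_prop)
    (fun x => (ae_restrict_mem measurableSet_Ioi).mono fun t (ht : 0 < t) => by positivity)
    ((Measure.ae_ne volume 0).mono fun x hx => integrableOn_rpow_mul_exp_neg_pi_mul
      (neg_one_lt_zero.trans_le (by positivity)) (norm_pos_iff.2 hx)) hmeas hAf]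
  simp only [smul_comm _ c, integral_smul]

lemma integral_quadraticSymbol_smul_eq_integral_gaussian [Nontrivial V] [NormedSpace ℝ F]
    [CompleteSpace F] (A : V →L[ℝ] V) {f : V → F} (hf : Integrable f) :
    ∫ ξ, quadraticSymbol A ξ • f ξ =
      -(Real.pi * volume.real (ball (0 : V) 1)) • ∫ t in Set.Ioi (0 : ℝ), ∫ ξ,
        ((t ^ 2)⁻¹ * Real.exp (-(Real.pi / t * ‖ξ‖ ^ 2))) • ⟪A ξ, ξ⟫ • f ξ := by
  set c := -(Real.pi * volume.real (ball (0 : V) 1)) with hc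
  have hmix (ξ : V) : quadraticSymbol A ξ • f ξ = (∫ t in Set.Ioi (0 : ℝ),
      (t ^ 2)⁻¹ * Real.exp (-(Real.pi / t * ‖ξ‖ ^ 2))) • c • ⟪A ξ, ξ⟫ • f ξ := by
    rcases eq_or_ne ξ 0 with rfl | hξ
    · simp [quadraticSymbol]
    · rw [integral_inv_sq_mul_exp_neg_pi_div (norm_pos_iff.2 hξ), quadraticSymbol, smul_smul,
        smul_smul, hc]
      congr 1
      field_simp
  have hmeas : AEStronglyMeasurable fun ξ => c • ⟪A ξ, ξ⟫ • f ξ :=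
    ((by fun_prop : Continuous fun ξ => ⟪A ξ, ξ⟫).aestronglyMeasurable.smul hf.1).const_smul c
  have hAf := integrable_quadraticSymbol_smul hf A
  simp only [hmix] at hAf ⊢
  rw [integral_integral_smul_swap_of_nonneg (by fun_prop)
    (fun ξ => ae_of_all _ fun t => by positivity)
    ((Measure.ae_ne volume 0).mono fun ξ hξ =>
      integrableOn_inv_sq_mul_exp_neg_pi_div (norm_pos_iff.2 hξ)) hmeas hAf]
  simp only [smul_comm _ c, integral_smul]

lemma integral_gaussian_smul_inner_map_self_smul_remainderAtZero [NormedSpace ℝ F]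
    {A : V →ₗ[ℝ] V} (hA : LinearMap.trace ℝ V A = 0) {s : ℝ} {f : V → F}
    (hf : Integrable (fun x => Real.exp (-(s * ‖x‖ ^ 2)) • ⟪A x, x⟫ • f x)) :
    ∫ x, Real.exp (-(s * ‖x‖ ^ 2)) • ⟪A x, x⟫ • remainderAtZero f x =
      ∫ x, Real.exp (-(s * ‖x‖ ^ 2)) • ⟪A x, x⟫ • f x := by
  set B : V → F := fun x => Real.exp (-(s * ‖x‖ ^ 2)) • ⟪A x, x⟫ • f 0
  have hBint : Integrable ((closedBall 0 1).indicator B) := by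
    have hAcont : Continuous A := A.continuous_of_finiteDimensional
    have hB : Continuous B := by fun_prop
    exact (hB.continuousOn.integrableOn_compact (isCompact_closedBall 0 1)).integrable_indicator
      measurableSet_closedBall
  have hBzero : ∫ x, (closedBall 0 1).indicator B x = 0 := by
    have hball : closedBall (0 : V) 1 = {x | ‖x‖ ∈ Set.Icc 0 1} := by
      ext x
      simp
    have hgauss : Continuous fun r : ℝ => Real.exp (-(s * r ^ 2)) • f 0 := by fun_prop
    rw [integral_indicator measurableSet_closedBall, hball,
      ← setIntegral_inner_map_self_smul_norm_eq_zero (a := 0) (b := 1) hgauss.continuousOn hA]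
    simp only [B, smul_comm (Real.exp _)]
  have hrem (x : V) : Real.exp (-(s * ‖x‖ ^ 2)) • ⟪A x, x⟫ • remainderAtZero f x =
      Real.exp (-(s * ‖x‖ ^ 2)) • ⟪A x, x⟫ • f x - (closedBall 0 1).indicator B x := by
    simp only [remainderAtZero, smul_sub, B, Set.indicator_smul_apply]
  simp only [hrem]
  rw [integral_sub hf hBint, hBzero, sub_zero]

variable [NormedSpace ℂ F] [CompleteSpace F]

lemma integral_gaussian_smul_inner_map_self_smul_remainderAtZero_fourier {A : V →ₗ[ℝ] V}
    (hA : LinearMap.trace ℝ V A = 0) {t : ℝ} (ht : 0 < t) (φ : 𝓢(V, F)) :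
    ∫ x, (t ^ (finrank ℝ V / 2 : ℝ) * Real.exp (-(Real.pi * t * ‖x‖ ^ 2))) •
        ⟪A x, x⟫ • remainderAtZero (𝓕 (φ : V → F)) x =
      -∫ ξ, ((t ^ 2)⁻¹ * Real.exp (-(Real.pi / t * ‖ξ‖ ^ 2))) • ⟪A ξ, ξ⟫ • φ ξ := by
  have hint : Integrable fun x : V =>
      Real.exp (-(Real.pi * t * ‖x‖ ^ 2)) • ⟪A x, x⟫ • 𝓕 (φ : V → F) x := by
    simp only [← fourier_coe, smul_comm (Real.exp _)]
    exact integrable_inner_map_self_smul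
      (integrable_norm_sq_smul_gaussian_smul (by positivity) (𝓕 φ)) A
  simp only [mul_smul, integral_smul]
  rw [integral_gaussian_smul_inner_map_self_smul_remainderAtZero hA hint, ← fourier_coe,
    integral_gaussian_smul_inner_map_self_smul_fourier ht, hA, zero_div, zero_smul, zero_sub,
    smul_neg, smul_neg, smul_smul, ← Real.rpow_add ht, add_neg_cancel, Real.rpow_zero, one_smul]

lemma integral_quadraticKernel_smul_remainderAtZero_fourier [Nontrivial V] {A : V →L[ℝ] V}
    (hA : LinearMap.trace ℝ V A = 0) (φ : 𝓢(V, F)) :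
    ∫ x, quadraticKernel A x • remainderAtZero (𝓕 (φ : V → F)) x =
      ∫ ξ, quadraticSymbol A ξ • φ ξ := by
  obtain ⟨L, hL⟩ := exists_lipschitzWith_schwartz (𝓕 φ)
  rw [← fourier_coe, integral_quadraticKernel_smul_eq_integral_gaussian
    (integrable_remainderAtZero (𝓕 φ).integrable).aestronglyMeasurable
    (integrable_smul_remainderAtZero (measurable_quadraticKernel A) (abs_quadraticKernel_le A)
      (𝓕 φ).integrable hL), integral_quadraticSymbol_smul_eq_integral_gaussian A φ.integrable,
    neg_smul, ← smul_neg, ← integral_neg]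
  congr 1
  exact setIntegral_congr_fun measurableSet_Ioi fun t ht =>
    integral_gaussian_smul_inner_map_self_smul_remainderAtZero_fourier hA ht φ

end QuadraticKernel

theorem fourier_transform_dipolar_kernel_general {V F : Type*} [NormedAddCommGroup V]
    [InnerProductSpace ℝ V] [FiniteDimensional ℝ V] [Nontrivial V] [MeasurableSpace V]
    [BorelSpace V] [NormedAddCommGroup F] [NormedSpace ℂ F] [CompleteSpace F] {A : V →L[ℝ] V}
    (hA : LinearMap.trace ℝ V A = 0) (φ : 𝓢(V, F)) :
    (∀ ε : ℝ, 0 < ε →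
      IntegrableOn (fun x => quadraticKernel A x • 𝓕 (φ : V → F) x) {x | ε ≤ ‖x‖}) ∧
    Tendsto (fun ε : ℝ => ∫ x in {x | ε ≤ ‖x‖}, quadraticKernel A x • 𝓕 (φ : V → F) x)
      (nhdsWithin 0 (Set.Ioi 0)) (nhds (∫ ξ, quadraticSymbol A ξ • φ ξ)) := by
  obtain ⟨L, hL⟩ := exists_lipschitzWith_schwartz (𝓕 φ)
  rw [← integral_quadraticKernel_smul_remainderAtZero_fourier hA φ, ← fourier_coe]
  exact ⟨fun ε hε => integrableOn_smul_of_abs_le_div_norm_pow (measurable_quadraticKernel A)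
      (abs_quadraticKernel_le A) (𝓕 φ).integrable hε,
    tendsto_setIntegral_smul_integral_smul_remainderAtZero (measurable_quadraticKernel A)
      (abs_quadraticKernel_le A)
      (fun ε hε => setIntegral_norm_mem_Icc_quadraticKernel_eq_zero hA hε) (𝓕 φ).integrable hL⟩

section Dipole

/-- The traceless operator `diag (1, 1, -2)`, whose quadratic form is the numerator of the dipolar
kernel. -/
def dipoleMap : EuclideanSpace ℝ (Fin 3) →L[ℝ] EuclideanSpace ℝ (Fin 3) :=
  Matrix.toEuclideanCLM (n := Fin 3) (𝕜 := ℝ) (Matrix.diagonal ![1, 1, -2])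

lemma inner_dipoleMap_self (x : EuclideanSpace ℝ (Fin 3)) :
    ⟪dipoleMap x, x⟫ = x 0 ^ 2 + x 1 ^ 2 - 2 * x 2 ^ 2 := by
  rw [real_inner_comm, dipoleMap, Matrix.inner_toEuclideanCLM]
  simp only [dotProduct, Matrix.mulVec_diagonal, Fin.sum_univ_three, Matrix.cons_val]
  ring

lemma trace_dipoleMap : LinearMap.trace ℝ (EuclideanSpace ℝ (Fin 3)) dipoleMap = 0 := by
  rw [LinearMap.trace_eq_sum_inner _ (EuclideanSpace.basisFun (Fin 3) ℝ)]
  simp [real_inner_comm _ (EuclideanSpace.single _ _), inner_dipoleMap_self, Fin.sum_univ_three,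
    one_add_one_eq_two]

lemma dipK_eq_quadraticKernel (x : EuclideanSpace ℝ (Fin 3)) :
    dipK x = quadraticKernel dipoleMap x := by
  rw [dipK, quadraticKernel, inner_dipoleMap_self, finrank_euclideanSpace_fin]

lemma dipm_eq_quadraticSymbol (ξ : EuclideanSpace ℝ (Fin 3)) :
    dipm ξ = quadraticSymbol dipoleMap ξ := by
  have hvol : volume.real (ball (0 : EuclideanSpace ℝ (Fin 3)) 1) = Real.pi * 4 / 3 := by
    rw [measureReal_def, EuclideanSpace.volume_ball_fin_three, ENNReal.ofReal_one, one_pow, one_mul,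
      ENNReal.toReal_ofReal (by positivity)]
  rw [dipm, quadraticSymbol, inner_dipoleMap_self, hvol]
  split_ifs with hξ
  · simp [hξ]
  · ring

end Dipole

end

/-- The Fourier transform of the dipolar kernel `K`, in the principal value /
tempered distribution sense, is the dipolar symbol `m`. -/
theorem fourier_transform_dipolar_kernel
    (φ : SchwartzMap (EuclideanSpace ℝ (Fin 3)) ℂ) :
    (∀ ε : ℝ, 0 < ε →
      IntegrableOn (fun x => (dipK x : ℂ) * 𝓕 (⇑φ) x)
        {x : EuclideanSpace ℝ (Fin 3) | ε ≤ ‖x‖} volume) ∧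
    Tendsto (fun ε : ℝ =>
        ∫ x in {x : EuclideanSpace ℝ (Fin 3) | ε ≤ ‖x‖}, (dipK x : ℂ) * 𝓕 (⇑φ) x)
      (nhdsWithin 0 (Set.Ioi 0))
      (nhds (∫ ξ, (dipm ξ : ℂ) * φ ξ)) := by
  simpa only [dipK_eq_quadraticKernel, dipm_eq_quadraticSymbol, Complex.real_smul] using
    fourier_transform_dipolar_kernel_general trace_dipoleMap φ

end
end

section
/- For every real-valued Schwartz function f : ℝ³ → ℝ, set g := 𝓕⁻¹(m · 𝓕f). Then g is a bounded, real-valued, continuously differentiable function with bounded gradient, the integrals below converge absolutely, and 2 ∫_{ℝ³} (x · ∇g(x)) f(x) dx = −3 ∫_{ℝ³} g(x) f(x) dx. (Equivalently, 2∫ x·∇(K∗f) f dx = −3∫ (K∗f) f dx; this reflects the fact that the symbol m is real, even, and homogeneous of degree zero, so that ξ·∇_ξ m(ξ) = 0 for ξ ≠ 0.) -/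
open MeasureTheory FourierTransform SchwartzMap

noncomputable section

/-!
In dimension `d`, let `T u = 𝓕⁻ (m · 𝓕 u)` with `m` absolutely homogeneous of degree `s`, and
consider `J c = ∫ T u (c x) u x dx`. On the Fourier side `J c = ∫ m ξ 𝓕 u ξ 𝓕⁻ u (c ξ) dξ`, and the
substitution `ξ ↦ -c ξ` exchanges the roles of `𝓕 u` and `𝓕⁻ u`, so that
`J c = c ^ (-(d + s)) J c⁻¹` for `c > 0`. Differentiating both sides at `c = 1` gives
`J' 1 = -(d + s) J 1 - J' 1`, while differentiating under the integral sign shows that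
`J' 1 = ∫ (x · ∇ (T u)) u`. No derivative of `m` is ever taken.
-/

open Module ComplexConjugate ENNReal

lemma two_smul_deriv_eq_of_eventuallyEq_rpow_smul_comp_inv {E : Type*} [NormedAddCommGroup E]
    [NormedSpace ℝ E] {J : ℝ → E} {J' : E} {a : ℝ} (hJ : HasDerivAt J J' 1)
    (hinv : ∀ᶠ c in nhds 1, J c = c ^ a • J c⁻¹) :
    (2 : ℝ) • J' = a • J 1 := by
  have hpow : HasDerivAt (fun c : ℝ => c ^ a) a 1 := by
    simpa using Real.hasDerivAt_rpow_const (x := 1) (p := a) (.inl one_ne_zero)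
  have hcomp : HasDerivAt (fun c => J c⁻¹) (-J') 1 := by
    have hJ_inv : HasDerivAt J J' (1 : ℝ)⁻¹ := by simpa using hJ
    simpa [Function.comp_def] using hJ_inv.scomp (1 : ℝ) (hasDerivAt_inv one_ne_zero)
  have hJ' : J' = -J' + a • J 1 := by
    simpa using hJ.unique ((hpow.smul hcomp).congr_of_eventuallyEq hinv)
  rw [two_smul]
  nth_rw 1 [hJ']
  abel

section Dilation

variable {V A : Type*} [NormedAddCommGroup V] [NormedSpace ℝ V] [NormedRing A]
  [NormedAlgebra ℝ A] {g φ : V → A} {B : ℝ}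

lemma norm_fderiv_apply_mul_le (hB : ∀ x, ‖fderiv ℝ g x‖ ≤ B) (x y : V) (a : A) :
    ‖fderiv ℝ g x y * a‖ ≤ B * (‖y‖ * ‖a‖) :=
  calc ‖fderiv ℝ g x y * a‖ ≤ ‖fderiv ℝ g x y‖ * ‖a‖ := norm_mul_le _ _
    _ ≤ B * ‖y‖ * ‖a‖ := by gcongr; exact (fderiv ℝ g x).le_of_opNorm_le (hB x) y
    _ = B * (‖y‖ * ‖a‖) := mul_assoc _ _ _

variable [MeasurableSpace V] [BorelSpace V] [SecondCountableTopology V] {μ : Measure V}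

lemma integrable_fderiv_apply_self_mul (hg : ContDiff ℝ 1 g) (hB : ∀ x, ‖fderiv ℝ g x‖ ≤ B)
    (hφ : AEStronglyMeasurable φ μ) (hxφ : Integrable (fun x => ‖x‖ * ‖φ x‖) μ) :
    Integrable (fun x => fderiv ℝ g x x * φ x) μ := by
  have hg' : Continuous fun x => fderiv ℝ g x x :=
    (hg.continuous_fderiv one_ne_zero).clm_apply continuous_id
  exact (hxφ.const_mul B).mono' (hg'.aestronglyMeasurable.mul hφ)
    (.of_forall fun x => norm_fderiv_apply_mul_le hB x x (φ x))

lemma hasDerivAt_integral_comp_smul_mul (hg : ContDiff ℝ 1 g) (hB : ∀ x, ‖fderiv ℝ g x‖ ≤ B)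
    (hφ : AEStronglyMeasurable φ μ) (hgφ : Integrable (fun x => g x * φ x) μ)
    (hxφ : Integrable (fun x => ‖x‖ * ‖φ x‖) μ) :
    HasDerivAt (fun c : ℝ => ∫ x, g (c • x) * φ x ∂μ) (∫ x, fderiv ℝ g x x * φ x ∂μ) 1 := by
  have hmeas (c : ℝ) : AEStronglyMeasurable (fun x => g (c • x) * φ x) μ :=
    (hg.continuous.comp (continuous_const_smul c)).aestronglyMeasurable.mul hφ
  have hderiv (x : V) (c : ℝ) :
      HasDerivAt (fun c : ℝ => g (c • x) * φ x) (fderiv ℝ g (c • x) x * φ x) c := by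
    have hline : HasDerivAt (fun c : ℝ => c • x) x c := by
      simpa using (hasDerivAt_id c).smul_const x
    exact ((hg.differentiable one_ne_zero _).hasFDerivAt.comp_hasDerivAt c hline).mul_const _
  have hg'φ := integrable_fderiv_apply_self_mul hg hB hφ hxφ
  simpa using (hasDerivAt_integral_of_dominated_loc_of_deriv_le (x₀ := (1 : ℝ))
    (F' := fun c x => fderiv ℝ g (c • x) x * φ x) Filter.univ_mem
    (.of_forall hmeas) (by simpa using hgφ) (by simpa using hg'φ.aestronglyMeasurable)
    (.of_forall fun x c _ => norm_fderiv_apply_mul_le hB (c • x) x (φ x)) (hxφ.const_mul B)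
    (.of_forall fun x c _ => hderiv x c)).2

end Dilation

section Fourier

variable {V E : Type*} [NormedAddCommGroup V] [InnerProductSpace ℝ V] [FiniteDimensional ℝ V]
  [MeasurableSpace V] [BorelSpace V] [NormedAddCommGroup E] [NormedSpace ℂ E]

lemma norm_fourierInv_le_integral_norm (k : V → E) (x : V) : ‖𝓕⁻ k x‖ ≤ ∫ ξ, ‖k ξ‖ :=
  VectorFourier.norm_fourierIntegral_le_integral_norm _ _ _ _ _

lemma contDiff_fourierInv {k : V → E} {N : ℕ∞}
    (hk : ∀ n : ℕ, n ≤ N → Integrable fun ξ => ‖ξ‖ ^ n * ‖k ξ‖) : ContDiff ℝ N (𝓕⁻ k) := by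
  rw [Real.fourierInv_eq_fourier_comp_neg]
  exact Real.contDiff_fourier fun n hn => by simpa using (hk n hn).comp_neg

lemma norm_fderiv_fourierInv_le {k : V → E} (hk : Integrable k)
    (hξk : Integrable fun ξ => ‖ξ‖ * ‖k ξ‖) (x : V) :
    ‖fderiv ℝ (𝓕⁻ k) x‖ ≤ 2 * Real.pi * ∫ ξ, ‖ξ‖ * ‖k ξ‖ := by
  have hξk_neg : Integrable fun ξ => ‖ξ‖ * ‖k (-ξ)‖ := by simpa using hξk.comp_neg
  rw [Real.fourierInv_eq_fourier_comp_neg, Real.fderiv_fourier hk.comp_neg hξk_neg]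
  calc ‖𝓕 (VectorFourier.fourierSMulRight (innerSL ℝ) fun ξ => k (-ξ)) x‖
      ≤ ∫ ξ, ‖VectorFourier.fourierSMulRight (innerSL ℝ) (fun ξ => k (-ξ)) ξ‖ :=
        VectorFourier.norm_fourierIntegral_le_integral_norm _ _ _ _ _
    _ = 2 * Real.pi * ∫ ξ, ‖ξ‖ * ‖k (-ξ)‖ := by
        simp only [VectorFourier.norm_fourierSMulRight, innerSL_apply_norm ℝ, mul_assoc,
          integral_const_mul]
    _ = 2 * Real.pi * ∫ ξ, ‖ξ‖ * ‖k ξ‖ := by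
        simpa using integral_neg_eq_self (fun ξ => ‖ξ‖ * ‖k ξ‖) volume

lemma integral_fourierInv_comp_smul_smul [CompleteSpace E] {k : V → ℂ} {φ : V → E}
    (hk : Integrable k) (hφ : Integrable φ) (c : ℝ) :
    ∫ x, 𝓕⁻ k (c • x) • φ x = ∫ ξ, k ξ • 𝓕⁻ φ (c • ξ) := by
  have hflip := VectorFourier.integral_fourierIntegral_smul_eq_flip (μ := volume) (ν := volume)
    (e := Real.fourierChar) (L := -(c • innerₗ V)) Real.continuous_fourierChar
    (by simp only [LinearMap.neg_apply, LinearMap.smul_apply, innerₗ_apply_apply]; fun_prop) hk hφ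
  simpa [VectorFourier.fourierIntegral, Real.fourierInv_eq, inner_smul_right, real_inner_comm]
    using hflip

lemma conj_fourier (u : V → ℂ) (ξ : V) :
    conj (𝓕 u ξ) = 𝓕 (fun y => conj (u y)) (-ξ) := by
  simp [Real.fourier_eq', ← integral_conj, ← Complex.exp_conj, Complex.conj_ofNat]

lemma conj_fourierInv (k : V → ℂ) (x : V) :
    conj (𝓕⁻ k x) = 𝓕⁻ (fun ξ => conj (k (-ξ))) x := by
  rw [Real.fourierInv_eq_fourier_neg, conj_fourier, neg_neg,
    Real.fourierInv_eq_fourier_comp_neg]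
  simp only [neg_neg]

end Fourier

/-- Absolute homogeneity of degree `s`. Taking `c = -1` shows that such functions are even; as
`c = 0` is excluded, for `s = 0` the value at the origin is arbitrary. -/
def IsAbsHomogeneous {V E : Type*} [AddCommGroup V] [Module ℝ V] [AddCommGroup E] [Module ℝ E]
    (s : ℝ) (m : V → E) : Prop :=
  ∀ c : ℝ, c ≠ 0 → ∀ ξ, m (c • ξ) = |c| ^ s • m ξ

namespace IsAbsHomogeneous

variable {V E F : Type*} [AddCommGroup V] [Module ℝ V] [AddCommGroup E] [Module ℝ E]
  [AddCommGroup F] [Module ℝ F] {s : ℝ} {m : V → E}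

lemma map_neg (hm : IsAbsHomogeneous s m) (ξ : V) : m (-ξ) = m ξ := by
  simpa using hm (-1) (by simp) ξ

lemma linearMap_comp (hm : IsAbsHomogeneous s m) (L : E →ₗ[ℝ] F) :
    IsAbsHomogeneous s fun ξ => L (m ξ) := fun c hc ξ => by
  simp only [hm c hc, map_smul]

end IsAbsHomogeneous

section FourierMultiplier

variable {V : Type*} [NormedAddCommGroup V] [InnerProductSpace ℝ V] [FiniteDimensional ℝ V]
  [MeasurableSpace V] [BorelSpace V]

/-- The Fourier multiplier operator `u ↦ 𝓕⁻ (m · 𝓕 u)` with symbol `m`, the Fourier transforms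
being the integrals over `V`. Unlike `SchwartzMap.fourierMultiplierCLM`, it allows symbols that
are not smooth. -/
def fourierMultiplier (m u : V → ℂ) : V → ℂ :=
  𝓕⁻ fun ξ => m ξ * 𝓕 u ξ

lemma conj_fourierMultiplier (m u : V → ℂ) (x : V) :
    conj (fourierMultiplier m u x) =
      fourierMultiplier (fun ξ => conj (m (-ξ))) (fun y => conj (u y)) x := by
  simp only [fourierMultiplier, conj_fourierInv, map_mul, conj_fourier, neg_neg]

lemma integral_fourierMultiplier_comp_smul_mul {m u v : V → ℂ}
    (hmu : Integrable fun ξ => m ξ * 𝓕 u ξ) (hv : Integrable v) (c : ℝ) :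
    ∫ x, fourierMultiplier m u (c • x) * v x = ∫ ξ, m ξ * 𝓕 u ξ * 𝓕⁻ v (c • ξ) :=
  integral_fourierInv_comp_smul_smul hmu hv c

lemma integral_fourierMultiplier_comp_smul_mul_comm {s : ℝ} {m u v : V → ℂ}
    (hm : IsAbsHomogeneous s m) (hu : Integrable u) (hv : Integrable v)
    (hmu : Integrable fun ξ => m ξ * 𝓕 u ξ) (hmv : Integrable fun ξ => m ξ * 𝓕 v ξ)
    {c : ℝ} (hc : c ≠ 0) :
    ∫ x, fourierMultiplier m u (c • x) * v x =
      |c| ^ (-(finrank ℝ V + s)) • ∫ x, fourierMultiplier m v (c⁻¹ • x) * u x := by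
  have hintegrand (ξ : V) : m (-c • ξ) * 𝓕 v (-c • ξ) * 𝓕⁻ u (c⁻¹ • -c • ξ) =
      |c| ^ s • (m ξ * 𝓕 u ξ * 𝓕⁻ v (c • ξ)) := by
    rw [hm _ (neg_ne_zero.2 hc), abs_neg, neg_smul, smul_neg, inv_smul_smul₀ hc,
      ← Real.fourierInv_eq_fourier_neg, Real.fourierInv_eq_fourier_neg u, neg_neg]
    simp only [smul_mul_assoc, mul_right_comm]
  have hjacobian : |((-c) ^ finrank ℝ V)⁻¹| = |c| ^ (-(finrank ℝ V : ℝ)) := by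
    rw [abs_inv, abs_pow, abs_neg, Real.rpow_neg (abs_nonneg c), Real.rpow_natCast]
  have hc_pos : 0 < |c| := abs_pos.2 hc
  have hsubst : |c| ^ s • ∫ ξ, m ξ * 𝓕 u ξ * 𝓕⁻ v (c • ξ) =
      |c| ^ (-(finrank ℝ V : ℝ)) • ∫ ξ, m ξ * 𝓕 v ξ * 𝓕⁻ u (c⁻¹ • ξ) := by
    simpa only [hintegrand, integral_smul, hjacobian] using Measure.integral_comp_smul volume
      (fun ξ => m ξ * 𝓕 v ξ * 𝓕⁻ u (c⁻¹ • ξ)) (-c)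
  rw [integral_fourierMultiplier_comp_smul_mul hmu hv,
    integral_fourierMultiplier_comp_smul_mul hmv hu, neg_add_rev, Real.rpow_add hc_pos, mul_smul,
    ← hsubst, smul_smul, ← Real.rpow_add hc_pos, neg_add_cancel, Real.rpow_zero, one_smul]

lemma contDiff_one_fourierMultiplier {m u : V → ℂ} (hmu : Integrable fun ξ => m ξ * 𝓕 u ξ)
    (hξmu : Integrable fun ξ => ‖ξ‖ * ‖m ξ * 𝓕 u ξ‖) :
    ContDiff ℝ 1 (fourierMultiplier m u) := by
  refine contDiff_fourierInv (N := 1) fun n hn => ?_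
  obtain rfl | rfl := Nat.le_one_iff_eq_zero_or_eq_one.1 (Nat.cast_le_one.1 hn)
  · simpa using hmu.norm
  · simpa using hξmu

lemma integrable_fourierMultiplier_mul {m u v : V → ℂ}
    (hmu : Integrable fun ξ => m ξ * 𝓕 u ξ) (hξmu : Integrable fun ξ => ‖ξ‖ * ‖m ξ * 𝓕 u ξ‖)
    (hv : Integrable v) : Integrable fun x => fourierMultiplier m u x * v x :=
  hv.bdd_mul (contDiff_one_fourierMultiplier hmu hξmu).continuous.aestronglyMeasurable
    (.of_forall (norm_fourierInv_le_integral_norm _))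

theorem two_mul_integral_fderiv_fourierMultiplier_apply_self_mul {s : ℝ} {m u : V → ℂ}
    (hm : IsAbsHomogeneous s m) (hu : Integrable u) (hxu : Integrable fun x => ‖x‖ * ‖u x‖)
    (hmu : Integrable fun ξ => m ξ * 𝓕 u ξ)
    (hξmu : Integrable fun ξ => ‖ξ‖ * ‖m ξ * 𝓕 u ξ‖) :
    2 * ∫ x, fderiv ℝ (fourierMultiplier m u) x x * u x =
      -(finrank ℝ V + s) * ∫ x, fourierMultiplier m u x * u x := by
  have hderiv := hasDerivAt_integral_comp_smul_mul (contDiff_one_fourierMultiplier hmu hξmu)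
    (norm_fderiv_fourierInv_le hmu hξmu) hu.aestronglyMeasurable
    (integrable_fourierMultiplier_mul hmu hξmu hu) hxu
  have hinv : ∀ᶠ c : ℝ in nhds 1, ∫ x, fourierMultiplier m u (c • x) * u x =
      c ^ (-(finrank ℝ V + s)) • ∫ x, fourierMultiplier m u (c⁻¹ • x) * u x := by
    filter_upwards [lt_mem_nhds one_pos] with c hc
    simpa only [abs_of_pos hc] using
      integral_fourierMultiplier_comp_smul_mul_comm hm hu hu hmu hmu hc.ne'
  simpa [Complex.real_smul] using
    two_smul_deriv_eq_of_eventuallyEq_rpow_smul_comp_inv hderiv hinv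

lemma integrable_pow_norm_mul_norm_mul_fourier {m : V → ℂ} (hm : MemLp m ∞)
    (φ : 𝓢(V, ℂ)) (n : ℕ) :
    Integrable fun ξ => ‖ξ‖ ^ n * ‖m ξ * 𝓕 (φ : V → ℂ) ξ‖ := by
  refine (((𝓕 φ).integrable_pow_mul volume n).mul_of_top_right hm.norm).congr
    (.of_forall fun ξ => ?_)
  simp only [Pi.mul_apply, SchwartzMap.fourier_coe, norm_mul, mul_left_comm]

lemma integrable_mul_fourier {m : V → ℂ} (hm : MemLp m ∞) (φ : 𝓢(V, ℂ)) :
    Integrable fun ξ => m ξ * 𝓕 (φ : V → ℂ) ξ :=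
  (𝓕 φ).integrable.mul_of_top_right hm

theorem dipolar_kernel_dilation_identity_general {s : ℝ} {m f : V → ℝ}
    (hm : IsAbsHomogeneous s m) (hf : Integrable f) (hxf : Integrable fun x => ‖x‖ * ‖f x‖)
    (hmf : Integrable fun ξ => (m ξ : ℂ) * 𝓕 (fun y => (f y : ℂ)) ξ)
    (hξmf : Integrable fun ξ => ‖ξ‖ * ‖(m ξ : ℂ) * 𝓕 (fun y => (f y : ℂ)) ξ‖) :
    let g := fourierMultiplier (fun ξ => (m ξ : ℂ)) (fun y => (f y : ℂ))
    (∀ x, (g x).im = 0) ∧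
    (∃ B : ℝ, ∀ x, ‖g x‖ ≤ B) ∧
    ContDiff ℝ 1 g ∧
    (∃ B : ℝ, ∀ x, ‖fderiv ℝ g x‖ ≤ B) ∧
    Integrable (fun x => fderiv ℝ g x x * (f x : ℂ)) ∧
    Integrable (fun x => g x * (f x : ℂ)) ∧
    2 * ∫ x, fderiv ℝ g x x * (f x : ℂ) = -(finrank ℝ V + s) * ∫ x, g x * (f x : ℂ) := by
  intro g
  have hm_ofReal : IsAbsHomogeneous s fun ξ => (m ξ : ℂ) :=
    hm.linearMap_comp Complex.ofRealCLM.toLinearMap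
  have hxf_ofReal : Integrable fun x => ‖x‖ * ‖(f x : ℂ)‖ := by simpa using hxf
  have hg := contDiff_one_fourierMultiplier hmf hξmf
  have hg' := norm_fderiv_fourierInv_le hmf hξmf
  have hreal (x : V) : (g x).im = 0 := by
    rw [← Complex.conj_eq_iff_im, conj_fourierMultiplier]
    simp only [Complex.conj_ofReal, hm.map_neg, g]
  exact ⟨hreal, ⟨_, norm_fourierInv_le_integral_norm _⟩, hg, ⟨_, hg'⟩,
    integrable_fderiv_apply_self_mul hg hg' hf.ofReal.aestronglyMeasurable hxf_ofReal,
    integrable_fourierMultiplier_mul hmf hξmf hf.ofReal,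
    two_mul_integral_fderiv_fourierMultiplier_apply_self_mul hm_ofReal hf.ofReal hxf_ofReal
      hmf hξmf⟩

end FourierMultiplier

-- Division by zero makes the quotient vanish at the origin, so no case distinction is left.
lemma dipm_eq_div (ξ : EuclideanSpace ℝ (Fin 3)) :
    dipm ξ = (4 * Real.pi / 3) * (2 * (ξ 2) ^ 2 - (ξ 1) ^ 2 - (ξ 0) ^ 2) / ‖ξ‖ ^ 2 := by
  by_cases hξ : ξ = 0 <;> simp [dipm, hξ]

lemma isAbsHomogeneous_zero_dipm : IsAbsHomogeneous 0 dipm := fun c hc ξ => by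
  simp only [dipm_eq_div, norm_smul, PiLp.smul_apply, smul_eq_mul, mul_pow, Real.norm_eq_abs,
    sq_abs, Real.rpow_zero, one_mul, ← mul_sub, mul_left_comm _ (c ^ 2)]
  exact mul_div_mul_left _ _ (pow_ne_zero 2 hc)

lemma abs_two_mul_sq_sub_sq_sub_sq_le (ξ : EuclideanSpace ℝ (Fin 3)) :
    |2 * (ξ 2) ^ 2 - (ξ 1) ^ 2 - (ξ 0) ^ 2| ≤ 2 * ‖ξ‖ ^ 2 := by
  rw [EuclideanSpace.real_norm_sq_eq, Fin.sum_univ_three, abs_le]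
  constructor <;> linarith [sq_nonneg (ξ 0), sq_nonneg (ξ 1), sq_nonneg (ξ 2)]

lemma abs_dipm_le (ξ : EuclideanSpace ℝ (Fin 3)) : |dipm ξ| ≤ 8 * Real.pi / 3 := by
  rw [dipm_eq_div, abs_div, abs_mul, abs_of_pos (by positivity : 0 < 4 * Real.pi / 3), abs_sq]
  refine div_le_of_le_mul₀ (by positivity) (by positivity) ?_
  calc 4 * Real.pi / 3 * |2 * (ξ 2) ^ 2 - (ξ 1) ^ 2 - (ξ 0) ^ 2|
      ≤ 4 * Real.pi / 3 * (2 * ‖ξ‖ ^ 2) := by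
        gcongr; exact abs_two_mul_sq_sub_sq_sub_sq_le ξ
    _ = 8 * Real.pi / 3 * ‖ξ‖ ^ 2 := by ring

lemma memLp_top_dipm : MemLp dipm ∞ := by
  have hmeas : Measurable dipm := by
    rw [funext dipm_eq_div]
    fun_prop
  exact memLp_top_of_bound hmeas.aestronglyMeasurable _ (.of_forall abs_dipm_le)

lemma sum_coord_mul_apply_single {ι : Type*} [Fintype ι] [DecidableEq ι]
    (L : EuclideanSpace ℝ ι →L[ℝ] ℂ) (x : EuclideanSpace ℝ ι) :
    ∑ j, (x j : ℂ) * L (EuclideanSpace.single j 1) = L x := by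
  conv_rhs => rw [← (EuclideanSpace.basisFun ι ℝ).sum_repr x]
  simp

/-- For real Schwartz `f` and `g := 𝓕⁻¹(m·𝓕f) = K ∗ f`: `g` is bounded,
real-valued, `C¹` with bounded gradient, the relevant integrals converge
absolutely, and `2∫ (x·∇g) f = −3∫ g f` (since `ξ·∇_ξ m(ξ) = 0`). -/
theorem dipolar_kernel_dilation_identity
    (f : SchwartzMap (EuclideanSpace ℝ (Fin 3)) ℝ) :
    let g : EuclideanSpace ℝ (Fin 3) → ℂ :=
      fun x => 𝓕⁻ (fun ξ => (dipm ξ : ℂ) * 𝓕 (fun y => ((f y : ℝ) : ℂ)) ξ) x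
    (∀ x, (g x).im = 0) ∧
    (∃ B : ℝ, ∀ x, ‖g x‖ ≤ B) ∧
    ContDiff ℝ 1 g ∧
    (∃ B : ℝ, ∀ x, ‖fderiv ℝ g x‖ ≤ B) ∧
    Integrable (fun x =>
      (∑ j : Fin 3, (x j : ℂ) * fderiv ℝ g x (EuclideanSpace.single j (1 : ℝ))) *
        ((f x : ℝ) : ℂ)) ∧
    Integrable (fun x => g x * ((f x : ℝ) : ℂ)) ∧
    2 * ∫ x, (∑ j : Fin 3,
        (x j : ℂ) * fderiv ℝ g x (EuclideanSpace.single j (1 : ℝ))) * ((f x : ℝ) : ℂ) =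
      -3 * ∫ x, g x * ((f x : ℝ) : ℂ) := by
  let φ : 𝓢(EuclideanSpace ℝ (Fin 3), ℂ) := f.postcompCLM Complex.ofRealCLM
  simpa [sum_coord_mul_apply_single] using! dipolar_kernel_dilation_identity_general
    isAbsHomogeneous_zero_dipm f.integrable (by simpa using f.integrable_pow_mul volume 1)
    (integrable_mul_fourier memLp_top_dipm.ofReal φ)
    (by simpa using! integrable_pow_norm_mul_norm_mul_fourier memLp_top_dipm.ofReal φ 1)

end
end
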